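/- Let h : Σ₂* → Σ₂* be a non-erasing morphism. If h(01101001) is 7/3-power-free, then there exists an integer k ≥ 0 such that either h = μ^k or h = E ∘ μ^k. -/

import Mathlib

/-- The Thue–Morse morphism `μ` on a single letter (`false` = 0, `true` = 1):
`μ(0) = 01`, `μ(1) = 10`. -/
def muLetter : Bool → List Bool
  | false => [false, true]
  | true  => [true, false]

/-- The Thue–Morse morphism `μ` on binary words. -/
def mu (w : List Bool) : List Bool := (w.map muLetter).flatten

/-- `z` is a `β`-power (for a rational `β`): `z = xⁿx'` with `x'` a prefix of `x`
and `n + |x'|/|x| = β`. -/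
def IsPower (β : ℚ) (z : List Bool) : Prop :=
  ∃ (n : ℕ) (x x' : List Bool), x ≠ [] ∧ x' <+: x ∧
    z = (List.replicate n x).flatten ++ x' ∧
    (n : ℚ) + (x'.length : ℚ) / (x.length : ℚ) = β

/-- The finite word `w` is `α`-power-free: no subword (contiguous factor) of `w`
is a `β`-power for any rational `β ≥ α`. -/
def PowerFree (α : ℝ) (w : List Bool) : Prop :=
  ∀ z : List Bool, z <:+: w → ∀ β : ℚ, α ≤ (β : ℝ) → ¬ IsPower β z

/-- The finite word `w` contains an `α`-power: some subword of `w` is a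
`β`-power for some rational `β ≥ α`. -/
def ContainsPower (α : ℝ) (w : List Bool) : Prop :=
  ∃ z : List Bool, z <:+: w ∧ ∃ β : ℚ, α ≤ (β : ℝ) ∧ IsPower β z

/-- `z` is a (finite) subword of the infinite word `w : ℕ → Bool`. -/
def InfSubword (z : List Bool) (w : ℕ → Bool) : Prop :=
  ∃ i : ℕ, z = (List.range z.length).map fun k => w (i + k)

/-- The infinite word `w` is `α`-power-free. -/
def PowerFreeInf (α : ℝ) (w : ℕ → Bool) : Prop :=
  ∀ z : List Bool, InfSubword z w → ∀ β : ℚ, α ≤ (β : ℝ) → ¬ IsPower β z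

/-- The infinite word `w` contains an `α`-power. -/
def ContainsPowerInf (α : ℝ) (w : ℕ → Bool) : Prop :=
  ∃ z : List Bool, InfSubword z w ∧ ∃ β : ℚ, α ≤ (β : ℝ) ∧ IsPower β z

/-- The length-`n` prefix of an infinite word. -/
def wordPrefix (w : ℕ → Bool) (n : ℕ) : List Bool := (List.range n).map w

/-- `h : Σ₂* → Σ₂*` is a morphism. -/
def IsMorphism (h : List Bool → List Bool) : Prop :=
  ∀ x y : List Bool, h (x ++ y) = h x ++ h y

/-- A morphism is non-erasing if it erases neither letter. -/
def NonErasing (h : List Bool → List Bool) : Prop :=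
  h [false] ≠ [] ∧ h [true] ≠ []

/-- The infinite word `u` is the image of the infinite word `w` under the morphism `h`
(obtained by concatenating the images of the letters of `w`): every `h(w[0..n))` is a
prefix of `u`, and these prefixes exhaust `u`. -/
def IsMorphImage (h : List Bool → List Bool) (w u : ℕ → Bool) : Prop :=
  (∀ n : ℕ, wordPrefix u (h (wordPrefix w n)).length = h (wordPrefix w n)) ∧
  ∀ m : ℕ, ∃ n : ℕ, m ≤ (h (wordPrefix w n)).length

/-- The complementation morphism `E` : `E(0) = 1`, `E(1) = 0`. -/
def eMorph (w : List Bool) : List Bool := w.map fun b => !b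

/-- The Thue–Morse word `μ^ω(0)` (`tm n` = parity of the binary digit sum of `n`). -/
def tm (n : ℕ) : Bool := (Nat.digits 2 n).sum % 2 == 1

/-- `μ³(0) = 01101001`. -/
def w01101001 : List Bool := [false, true, true, false, true, false, false, true]

/-- `μ³(1) = 10010110`. -/
def w10010110 : List Bool := [true, false, false, true, false, true, true, false]

/-!
Write `a`, `b` for the images of the letters, so that `h(01101001) = abbabaab`. In a
`7/3`-power-free word, adjacent equal letters away from the ends occur at positions of one parity
only, so up to two letters at each end such a word is `μ(y)`. The repeated factors of `abbabaab`
then force `a` and `b` to be complementary letters or both of even length. In the even case, a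
common last letter of `a` and `b` would create an overlap `x x c` far from the ends, and undoing `μ`
repeatedly would halve its period until it became a power of exponent at least `7/3`. So the last
letters differ, and one of them equals the first letter of `b`; this double straddles two of the
factors `a`, `b`, so the blocks of `μ` fit inside the factors: `a = μ(a')` and `b = μ(b')`. Finally
`a'b'b'a'b'a'a'b'` is again `7/3`-power-free, and induction on the length ends the proof.
-/

section Morphisms

namespace IsMorphism

variable {f g : List Bool → List Bool}

theorem map_nil (hf : IsMorphism f) : f [] = [] :=
  List.self_eq_append_left.mp (hf [] [])

theorem ext (hf : IsMorphism f) (hg : IsMorphism g) (h : ∀ c, f [c] = g [c]) : f = g := by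
  funext w
  induction w with
  | nil => rw [hf.map_nil, hg.map_nil]
  | cons c w ih => rw [← List.singleton_append, hf, hg, h, ih]

theorem comp (hf : IsMorphism f) (hg : IsMorphism g) : IsMorphism (f ∘ g) := fun x y => by
  simp only [Function.comp_apply, hg x y, hf (g x) (g y)]

theorem iterate (hf : IsMorphism f) : ∀ k, IsMorphism f^[k]
  | 0 => fun _ _ => rfl
  | k + 1 => (hf.iterate k).comp hf

end IsMorphism

theorem isMorphism_eMorph : IsMorphism eMorph := fun _ _ => List.map_append

theorem isMorphism_mu : IsMorphism mu := fun _ _ => by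
  simp only [mu, List.map_append, List.flatten_append]

theorem mu_cons (c : Bool) (x : List Bool) : mu (c :: x) = c :: (!c) :: mu x := by
  cases c <;> rfl

theorem commute_eMorph_mu : Function.Commute eMorph mu := fun x => by
  induction x with
  | nil => rfl
  | cons c x ih =>
    simp only [eMorph, List.map_cons, mu_cons] at ih ⊢
    rw [ih]

theorem length_mu (x : List Bool) : (mu x).length = 2 * x.length := by
  induction x with
  | nil => rfl
  | cons c x ih => simp only [mu_cons, List.length_cons, ih]; ring

theorem mu_flatten_replicate (n : ℕ) (x : List Bool) :
    mu (List.replicate n x).flatten = (List.replicate n (mu x)).flatten := by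
  induction n with
  | zero => rfl
  | succ n ih => simp only [List.replicate_succ, List.flatten_cons, isMorphism_mu _ _, ih]

theorem getElem?_mu_two_mul (x : List Bool) (k : ℕ) : (mu x)[2 * k]? = x[k]? := by
  induction x generalizing k with
  | nil => rfl
  | cons c x ih => cases k <;> simp [mu_cons, mul_add, ih]

theorem getElem?_mu_two_mul_add_one (x : List Bool) (k : ℕ) :
    (mu x)[2 * k + 1]? = x[k]?.map (!·) := by
  induction x generalizing k with
  | nil => rfl
  | cons c x ih => cases k <;> simp [mu_cons, mul_add, ih]

theorem getElem?_mu_eq_iff {x : List Bool} {k l r : ℕ} (hr : r < 2) :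
    (mu x)[2 * k + r]? = (mu x)[2 * l + r]? ↔ x[k]? = x[l]? := by
  obtain rfl | rfl : r = 0 ∨ r = 1 := by lia
  · simp only [add_zero, getElem?_mu_two_mul]
  · simp only [getElem?_mu_two_mul_add_one]
    exact (Option.map_injective Bool.not_injective).eq_iff

theorem exists_eq_mu : ∀ {x : List Bool}, Even x.length →
    (∀ k, 2 * k < x.length → x[2 * k]? ≠ x[2 * k + 1]?) → ∃ y, x = mu y
  | [], _, _ => ⟨[], rfl⟩
  | [_], hx, _ => absurd hx Nat.not_even_one
  | c :: d :: x, hx, hne => by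
    obtain ⟨y, rfl⟩ : ∃ y, x = mu y := by
      refine exists_eq_mu (by simpa [Nat.even_add_one] using hx) fun k hk => ?_
      simpa [mul_add] using hne (k + 1) (by simp only [List.length_cons]; lia)
    have hcd : c ≠ d := by simpa using hne 0 (by simp)
    exact ⟨c :: y, by rw [mu_cons, Bool.eq_not_of_ne hcd.symm]⟩

end Morphisms

section Powers

theorem eq_flatten_replicate_append_take {α : Type*} {x z : List α} (hx : x ≠ [])
    (h : z <+: x ++ z) :
    z = (List.replicate (z.length / x.length) x).flatten ++ x.take (z.length % x.length) := by
  have hpos : 0 < x.length := List.length_pos_iff.mpr hx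
  obtain hlt | hle := lt_or_ge z.length x.length
  · have hzx : z <+: x := List.prefix_of_prefix_length_le h (List.prefix_append x z) hlt.le
    rw [Nat.div_eq_of_lt hlt, Nat.mod_eq_of_lt hlt]
    simpa using List.prefix_iff_eq_take.mp hzx
  · obtain ⟨z', rfl⟩ := List.prefix_of_prefix_length_le (List.prefix_append x z) h hle
    have ih := eq_flatten_replicate_append_take hx ((List.prefix_append_right_inj x).mp h)
    rw [List.length_append, Nat.add_div_left _ hpos, Nat.add_mod_left, List.replicate_succ,
      List.flatten_cons, List.append_assoc, ← ih]
termination_by z.length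
decreasing_by grind

theorem isPower_of_hasPeriod {z : List Bool} {p : ℕ} (hp : 0 < p) (hpz : p ≤ z.length)
    (h : z.HasPeriod p) : IsPower (z.length / p) z := by
  have hlen : (z.take p).length = p := List.length_take_of_le hpz
  have hx : z.take p ≠ [] := List.ne_nil_of_length_pos (hlen.symm ▸ hp)
  refine ⟨z.length / p, z.take p, (z.take p).take (z.length % p), hx, List.take_prefix _ _, ?_, ?_⟩
  · simpa only [hlen] using eq_flatten_replicate_append_take hx h
  · rw [List.length_take, hlen, min_eq_left (Nat.mod_lt _ hp).le]
    have hp' : (p : ℚ) ≠ 0 := by positivity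
    field_simp
    exact_mod_cast Nat.div_add_mod' z.length p

theorem IsPower.map_mu {β : ℚ} {z : List Bool} (h : IsPower β z) : IsPower β (mu z) := by
  obtain ⟨n, x, x', hx, ⟨y, rfl⟩, rfl, hβ⟩ := h
  refine ⟨n, mu (x' ++ y), mu x', ?_, ⟨mu y, (isMorphism_mu _ _).symm⟩, ?_, ?_⟩
  · rw [← List.length_pos_iff] at hx ⊢
    rw [length_mu]
    lia
  · rw [isMorphism_mu, mu_flatten_replicate]
  · rw [length_mu, length_mu, ← hβ]
    push_cast
    rw [mul_div_mul_left _ _ two_ne_zero]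

namespace PowerFree

variable {α : ℝ} {w : List Bool}

theorem of_isInfix {v : List Bool} (h : PowerFree α w) (hv : v <:+: w) : PowerFree α v :=
  fun z hz => h z (hz.trans hv)

theorem mono {β : ℝ} (h : PowerFree α w) (hαβ : α ≤ β) : PowerFree β w :=
  fun z hz γ hγ => h z hz γ (hαβ.trans hγ)

theorem of_mu (h : PowerFree α (mu w)) : PowerFree α w := by
  rintro z ⟨s, t, rfl⟩ β hβ hz
  exact h (mu z) ⟨mu s, mu t, by simp only [isMorphism_mu _ _]⟩ β hβ hz.map_mu

theorem exists_getElem?_ne {i p L : ℕ} (h : PowerFree α w) (hα : 1 ≤ α) (hp : 0 < p)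
    (hL : α * p ≤ L) (hi : i + L ≤ w.length) :
    ∃ k, k + p < L ∧ w[i + k]? ≠ w[i + k + p]? := by
  by_contra! hall
  set z := (w.drop i).take L
  have hz : z <:+: w := (List.take_prefix _ _).isInfix.trans (List.drop_suffix _ _).isInfix
  have hzL : z.length = L := List.length_take_of_le (by rw [List.length_drop]; lia)
  have hper : z.HasPeriod p := List.hasPeriod_iff_getElem?.mpr fun k hk => by
    rw [List.getElem?_take_of_lt (by lia), List.getElem?_take_of_lt (by lia), List.getElem?_drop,
      List.getElem?_drop, hall k (by lia), add_assoc]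
  have hpL : p ≤ L := by
    have : (p : ℝ) ≤ α * p := le_mul_of_one_le_left p.cast_nonneg hα
    exact_mod_cast this.trans hL
  refine h z hz _ ?_ (isPower_of_hasPeriod hp (hzL.symm ▸ hpL) hper)
  rw [hzL]
  push_cast
  rwa [le_div_iff₀ (by positivity)]

end PowerFree

end Powers

section Doubles

theorem getElem?_append_length_add {α : Type*} (x y : List α) (k : ℕ) :
    (x ++ y)[x.length + k]? = y[k]? := by
  rw [List.getElem?_append_right (Nat.le_add_right _ _), Nat.add_sub_cancel_left]

theorem getElem?_eq_of_ne_of_ne {w : List Bool} {i j k : ℕ} (hi : i < w.length)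
    (hj : j < w.length) (hk : k < w.length) (hij : w[i]? ≠ w[j]?) (hjk : w[j]? ≠ w[k]?) :
    w[i]? = w[k]? := by
  rw [List.getElem?_eq_getElem hi, List.getElem?_eq_getElem hj, ne_eq, Option.some_inj] at hij
  rw [List.getElem?_eq_getElem hj, List.getElem?_eq_getElem hk, ne_eq, Option.some_inj] at hjk
  rw [List.getElem?_eq_getElem hi, List.getElem?_eq_getElem hk, Option.some_inj,
    Bool.eq_not_of_ne hij, Bool.eq_not_of_ne hjk, Bool.not_not]

/-- The letters of `w` at positions `i` and `i + 1` are equal, and neither of them is the first or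
the last letter of `w`. Doubles at the ends are left out because in a `7/3`-power-free word only the
inner ones are bound to occur at positions of the same parity. -/
def IsInnerDouble (w : List Bool) (i : ℕ) : Prop :=
  0 < i ∧ i + 2 < w.length ∧ w[i]? = w[i + 1]?

theorem isInnerDouble_append {u v : List Bool} (c : Bool) (hu : u ≠ []) (hv : v ≠ []) :
    IsInnerDouble (u ++ c :: c :: v) u.length := by
  have hv' := List.length_pos_iff.mpr hv
  exact ⟨List.length_pos_iff.mpr hu, by simp only [List.length_append, List.length_cons]; lia,
    by simp⟩

theorem isInnerDouble_of_getLast_eq_head {u x y v : List Bool} (hu : u ≠ []) (hv : v ≠ [])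
    (hx : x ≠ []) (hy : y ≠ []) (h : x.getLast hx = y.head hy) :
    IsInnerDouble (u ++ x ++ y ++ v) (u.length + x.length - 1) := by
  obtain ⟨x, c, rfl⟩ := List.eq_nil_or_concat' x |>.resolve_left hx
  obtain ⟨d, y, rfl⟩ := List.exists_cons_of_ne_nil hy
  obtain rfl : c = d := by simpa using h
  simpa using isInnerDouble_append (u := u ++ x) (v := y ++ v) c (by simp [hu]) (by simp [hv])

theorem isChain_ne_append {α : Type*} {x y : List α} (hx : x.IsChain (· ≠ ·))
    (hy : y.IsChain (· ≠ ·)) (hx' : x ≠ []) (hy' : y ≠ []) (h : x.getLast hx' ≠ y.head hy') :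
    (x ++ y).IsChain (· ≠ ·) :=
  hx.append hy (by simpa [List.getLast?_eq_some_getLast hx', List.head?_eq_some_head hy'] using h)

theorem exists_eq_mu_of_not_isInnerDouble {w u x v : List Bool} (hw : w = u ++ x ++ v)
    (hu : u ≠ []) (hv : v ≠ []) (hx : Even x.length)
    (h : ∀ i, i % 2 = u.length % 2 → ¬ IsInnerDouble w i) : ∃ y, x = mu y := by
  have hu' := List.length_pos_iff.mpr hu
  have hv' := List.length_pos_iff.mpr hv
  refine exists_eq_mu hx fun k hk heq => ?_
  have hk' : 2 * k + 1 < x.length := by grind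
  refine h (u.length + 2 * k) (by lia) ⟨by lia, by grind, ?_⟩
  rwa [hw, List.append_assoc, add_assoc, getElem?_append_length_add, getElem?_append_length_add,
    List.getElem?_append_left hk, List.getElem?_append_left hk']

namespace PowerFree

variable {w : List Bool}

theorem exists_getElem?_eq_succ {i : ℕ} (h : PowerFree (5 / 2) w) (hi : i + 5 ≤ w.length) :
    ∃ d ≤ 3, w[i + d]? = w[i + d + 1]? := by
  by_contra! hne
  obtain ⟨k, hk, hk2⟩ := h.exists_getElem?_ne (p := 2) (by norm_num) two_pos (by norm_num) hi
  exact hk2 (getElem?_eq_of_ne_of_ne (by lia) (by lia) (by lia) (hne k (by lia))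
    (hne (k + 1) (by lia)))

theorem length_lt_five_of_isChain_ne (h : PowerFree (5 / 2) w) (hw : w.IsChain (· ≠ ·)) :
    w.length < 5 := by
  by_contra! hlen
  obtain ⟨d, hd, heq⟩ := h.exists_getElem?_eq_succ (i := 0) (by lia)
  rw [List.getElem?_eq_getElem (by lia), List.getElem?_eq_getElem (by lia), Option.some_inj] at heq
  exact List.isChain_iff_getElem.mp hw _ (by lia) heq

theorem getLast_eq_head_of_square_append {x y : List Bool} (h : PowerFree (5 / 2) (x ++ x ++ y))
    (hx : x ≠ []) (hy : y ≠ []) (hxc : x.IsChain (· ≠ ·)) (hyc : y.IsChain (· ≠ ·))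
    (hxy : x.getLast hx ≠ y.head hy) : x.getLast hx = x.head hx := by
  by_contra hne
  have hc : (x ++ x ++ y).IsChain (· ≠ ·) :=
    isChain_ne_append (isChain_ne_append hxc hxc hx hx hne) hyc (by simp [hx]) hy (by simpa [hx])
  have hlen := h.length_lt_five_of_isChain_ne hc
  have hy' := List.length_pos_iff.mpr hy
  have hx' : x.length ≠ 1 := by grind
  grind

theorem getLast_eq_head_of_append_square {x y : List Bool} (h : PowerFree (5 / 2) (y ++ x ++ x))
    (hy : y ≠ []) (hx : x ≠ []) (hyc : y.IsChain (· ≠ ·)) (hxc : x.IsChain (· ≠ ·))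
    (hyx : y.getLast hy ≠ x.head hx) : x.getLast hx = x.head hx := by
  by_contra hne
  have hc : (y ++ x ++ x).IsChain (· ≠ ·) :=
    isChain_ne_append (isChain_ne_append hyc hxc hy hx hyx) hxc (by simp [hx]) hx (by simpa [hx])
  have hlen := h.length_lt_five_of_isChain_ne hc
  have hy' := List.length_pos_iff.mpr hy
  have hx' : x.length ≠ 1 := by grind
  grind

theorem getElem?_succ_ne_of_eq {i : ℕ} (h : PowerFree 3 w) (hi : i + 2 < w.length)
    (heq : w[i]? = w[i + 1]?) : w[i + 1]? ≠ w[i + 2]? := by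
  obtain ⟨k, hk, hne⟩ := h.exists_getElem?_ne (i := i) (p := 1) (L := 3) (by norm_num) one_pos
    (by norm_num) (by lia)
  obtain rfl | rfl : k = 0 ∨ k = 1 := by lia
  · exact absurd heq hne
  · exact hne

-- The letters around the two doubles would form a factor `c̄ c c c̄ c c c̄`, of exponent `7/3`.
theorem not_isInnerDouble_add_three {i : ℕ} (h : PowerFree (7 / 3) w) (hi : IsInnerDouble w i) :
    ¬ IsInnerDouble w (i + 3) := by
  rintro ⟨-, hlen, h45⟩
  obtain ⟨hpos, -, h12⟩ := hi
  obtain ⟨j, rfl⟩ : ∃ j, i = j + 1 := Nat.exists_eq_add_one.mpr hpos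
  simp only [add_assoc, Nat.reduceAdd] at h12 h45 hlen
  have hcube : PowerFree 3 w := h.mono (by norm_num)
  have h01 : w[j]? ≠ w[j + 1]? := fun he => hcube.getElem?_succ_ne_of_eq (by lia) he h12
  have h23 : w[j + 2]? ≠ w[j + 3]? := hcube.getElem?_succ_ne_of_eq (by lia) h12
  have h34 : w[j + 3]? ≠ w[j + 4]? := fun he => hcube.getElem?_succ_ne_of_eq (by lia) he h45
  have h56 : w[j + 5]? ≠ w[j + 6]? := hcube.getElem?_succ_ne_of_eq (by lia) h45
  obtain ⟨k, hk, hne⟩ := h.exists_getElem?_ne (i := j) (p := 3) (L := 7) (by norm_num)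
    three_pos (by norm_num) (by lia)
  refine hne ?_
  obtain rfl | rfl | rfl | rfl : k = 0 ∨ k = 1 ∨ k = 2 ∨ k = 3 := by lia
  · exact getElem?_eq_of_ne_of_ne (by lia) (by lia) (by lia) h01 (h12 ▸ h23)
  · exact h12.trans (getElem?_eq_of_ne_of_ne (by lia) (by lia) (by lia) h23 h34)
  · exact (getElem?_eq_of_ne_of_ne (by lia) (by lia) (by lia) h23 h34).trans h45
  · exact getElem?_eq_of_ne_of_ne (by lia) (by lia) (by lia) h34 (h45 ▸ h56)

theorem even_of_isInnerDouble_add (h : PowerFree (7 / 3) w) {i d : ℕ} (hi : IsInnerDouble w i)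
    (hd : IsInnerDouble w (i + d)) : Even d := by
  induction d using Nat.strong_induction_on generalizing i with
  | _ d ih =>
    obtain rfl | rfl | hd' | hd5 : d = 1 ∨ d = 3 ∨ (d = 0 ∨ d = 2 ∨ d = 4) ∨ 5 ≤ d := by lia
    · exact absurd hd.2.2 ((h.mono (by norm_num)).getElem?_succ_ne_of_eq (by grind [hd.2.1]) hi.2.2)
    · exact absurd hd (h.not_isInnerDouble_add_three hi)
    · grind
    · have hlen := hd.2.1
      obtain ⟨e, he, heq⟩ := (h.mono (by norm_num)).exists_getElem?_eq_succ (i := i + 1) (by lia)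
      have hmid : IsInnerDouble w (i + (e + 1)) :=
        ⟨by lia, by lia, by rwa [add_assoc i, add_comm 1 e] at heq⟩
      have hleft : Even (e + 1) := ih (e + 1) (by lia) hi hmid
      have hright : Even (d - (e + 1)) :=
        ih (d - (e + 1)) (by lia) hmid (by rwa [add_assoc, Nat.add_sub_cancel' (by lia)])
      rw [← Nat.add_sub_cancel' (show e + 1 ≤ d by lia)]
      exact hleft.add hright

theorem isInnerDouble_mod_two_eq (h : PowerFree (7 / 3) w) {i j : ℕ} (hi : IsInnerDouble w i)
    (hj : IsInnerDouble w j) : i % 2 = j % 2 := by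
  wlog hij : i ≤ j generalizing i j
  · exact (this hj hi (le_of_not_ge hij)).symm
  obtain ⟨d, rfl⟩ := Nat.exists_eq_add_of_le hij
  have := Nat.even_iff.mp (h.even_of_isInnerDouble_add hi hj)
  lia

theorem length_mod_two_eq {u v u' v' : List Bool} {c d : Bool} (h : PowerFree (7 / 3) w)
    (hw : w = u ++ c :: c :: v) (hw' : w = u' ++ d :: d :: v') (hu : u ≠ []) (hv : v ≠ [])
    (hu' : u' ≠ []) (hv' : v' ≠ []) : u.length % 2 = u'.length % 2 :=
  h.isInnerDouble_mod_two_eq (hw ▸ isInnerDouble_append c hu hv)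
    (hw' ▸ isInnerDouble_append d hu' hv')

/-- A form of the Restivo–Salemi factorization theorem. -/
theorem exists_eq_append_mu_append (h : PowerFree (7 / 3) w) (hw : 3 ≤ w.length) :
    ∃ u y v, w = u ++ mu y ++ v ∧ u.length ∈ Set.Icc 1 2 ∧ v.length ∈ Set.Icc 1 2 := by
  obtain ⟨s, ⟨hs1, hs2⟩, hdouble⟩ :
      ∃ s ∈ Set.Icc 1 2, ∀ i, i % 2 = s % 2 → ¬ IsInnerDouble w i := by
    by_contra! hboth
    obtain ⟨i, hi, hi'⟩ := hboth 1 (by simp)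
    obtain ⟨j, hj, hj'⟩ := hboth 2 (by simp)
    have := h.isInnerDouble_mod_two_eq hi' hj'
    lia
  set n := (w.length - 1 - s) / 2
  have hsplit : w = w.take s ++ (w.drop s).take (2 * n) ++ (w.drop s).drop (2 * n) := by
    rw [List.append_assoc, List.take_append_drop, List.take_append_drop]
  have hu : (w.take s).length = s := List.length_take_of_le (by lia)
  have hx : ((w.drop s).take (2 * n)).length = 2 * n :=
    List.length_take_of_le (by rw [List.length_drop]; lia)
  have hv : ((w.drop s).drop (2 * n)).length ∈ Set.Icc 1 2 := by
    rw [List.length_drop, List.length_drop]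
    constructor <;> lia
  obtain ⟨y, hy⟩ := exists_eq_mu_of_not_isInnerDouble hsplit
    (List.ne_nil_of_length_pos (by lia)) (List.ne_nil_of_length_pos hv.1)
    (by simp [hx]) (by rwa [hu])
  exact ⟨w.take s, y, _, hy ▸ hsplit, hu.symm ▸ ⟨hs1, hs2⟩, hv⟩

end PowerFree

end Doubles

section Overlaps

namespace PowerFree

-- Undoing `μ` halves the period `p`, and the bounds on the distance to the ends of `w` survive.
theorem exists_getElem?_ne_of_le {w : List Bool} {i p : ℕ} (h : PowerFree (7 / 3) w) (hp : 0 < p)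
    (hlen : i + 2 * p < w.length) (hleft : p ≤ i + 2) (hright : i + 3 * p ≤ w.length + 1) :
    ∃ k ≤ p, w[i + k]? ≠ w[i + k + p]? := by
  induction p using Nat.strong_induction_on generalizing w i with
  | _ p ih =>
    obtain hp3 | hp4 := Nat.lt_or_ge p 4
    · have hp3' : (p : ℝ) ≤ 3 := by exact_mod_cast Nat.lt_succ_iff.mp hp3
      obtain ⟨k, hk, hne⟩ := h.exists_getElem?_ne (i := i) (L := 2 * p + 1) (by norm_num) hp
        (by push_cast; linarith) (by lia)
      exact ⟨k, by lia, hne⟩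
    by_contra! hoverlap
    have heven : Even p := by
      obtain ⟨d, hd, heq⟩ := (h.mono (by norm_num)).exists_getElem?_eq_succ (i := i) (by lia)
      refine h.even_of_isInnerDouble_add (i := i + d) ⟨by lia, by lia, heq⟩ ⟨by lia, by lia, ?_⟩
      have hnext : w[i + d + 1]? = w[i + d + p + 1]? := by
        simpa only [add_assoc, add_comm 1 p] using hoverlap (d + 1) (by lia)
      rw [← hoverlap d (by lia), heq, hnext]
    obtain ⟨c, rfl⟩ := heven.two_dvd
    obtain ⟨u, y, v, rfl, ⟨-, hu2⟩, -, hv2⟩ := h.exists_eq_append_mu_append (by lia)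
    simp only [List.length_append, length_mu] at hlen hright
    have hy : PowerFree (7 / 3) y := (h.of_isInfix (List.infix_append u (mu y) v)).of_mu
    obtain ⟨k, hk, hne⟩ := ih c (by lia) (i := (i - u.length) / 2) hy (by lia) (by lia) (by lia)
      (by lia)
    refine hne ?_
    have hmid (m : ℕ) (hm : m < 2 * y.length) : (u ++ mu y ++ v)[u.length + m]? = (mu y)[m]? := by
      rw [List.append_assoc, getElem?_append_length_add,
        List.getElem?_append_left (by rwa [length_mu])]
    have hk2 := hoverlap (2 * k) (by lia)
    set j := (i - u.length) / 2
    set r := (i - u.length) % 2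
    rwa [show i + 2 * k = u.length + (2 * (j + k) + r) by lia,
      show u.length + (2 * (j + k) + r) + 2 * c = u.length + (2 * (j + k + c) + r) by lia,
      hmid _ (by lia), hmid _ (by lia), getElem?_mu_eq_iff (by lia)] at hk2

theorem getLast_ne_getLast_of_square {u x v : List Bool} (h : PowerFree (7 / 3) (u ++ x ++ x ++ v))
    (hu : u ≠ []) (hx : x ≠ []) (hxu : x.length ≤ u.length + 1) (hxv : x.length ≤ v.length + 2) :
    u.getLast hu ≠ x.getLast hx := by
  intro heq
  obtain ⟨u, c, rfl⟩ := List.eq_nil_or_concat' u |>.resolve_left hu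
  obtain ⟨x, d, rfl⟩ := List.eq_nil_or_concat' x |>.resolve_left hx
  obtain rfl : c = d := by simpa using heq
  set y := c :: x with hy
  have hxy : y.length = x.length + 1 := List.length_cons
  have hw : (u ++ [c]) ++ (x ++ [c]) ++ (x ++ [c]) ++ v = u ++ (y ++ (y ++ [c] ++ v)) := by
    simp [hy]
  have hstart : y ++ (y ++ [c] ++ v) = (y ++ [c]) ++ (x ++ [c] ++ v) := by simp [hy]
  rw [hw] at h
  simp only [List.length_append, List.length_singleton] at hxu hxv
  obtain ⟨k, hk, hne⟩ := h.exists_getElem?_ne_of_le (i := u.length) (p := y.length) (by lia)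
    (by grind) (by lia) (by grind)
  have hk' : k < (y ++ [c]).length := by simpa using Nat.lt_succ_of_le hk
  refine hne ?_
  rw [show u.length + k + y.length = u.length + (y.length + k) by lia,
    getElem?_append_length_add, getElem?_append_length_add, getElem?_append_length_add, hstart,
    List.getElem?_append_left hk', List.getElem?_append_left hk']

end PowerFree

end Overlaps

/-- The value `abbabaab` at `01101001` of the morphism that sends `0` to `a` and `1` to `b`. -/
def thueMorseProduct (a b : List Bool) : List Bool := a ++ b ++ b ++ a ++ b ++ a ++ a ++ b

theorem IsMorphism.map_w01101001 {h : List Bool → List Bool} (hh : IsMorphism h) :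
    h w01101001 = thueMorseProduct (h [false]) (h [true]) := by
  change h ([false] ++ [true] ++ [true] ++ [false] ++ [true] ++ [false] ++ [false] ++ [true]) = _
  simp only [thueMorseProduct, hh _ _]

theorem mu_thueMorseProduct (a b : List Bool) :
    mu (thueMorseProduct a b) = thueMorseProduct (mu a) (mu b) := by
  simp only [thueMorseProduct, isMorphism_mu _ _]

theorem exists_append_cons_cons_of_not_isChain_ne {α : Type*} {x : List α}
    (hx : ¬ x.IsChain (· ≠ ·)) : ∃ s c t, x = s ++ c :: c :: t := by
  rw [List.isChain_iff_forall_rel_of_append_cons_cons] at hx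
  push Not at hx
  obtain ⟨c, _, s, t, rfl, rfl⟩ := hx
  exact ⟨s, c, t, rfl⟩

section Product

variable {a b : List Bool}

theorem even_length_of_not_isChain_ne_left (h : PowerFree (7 / 3) (thueMorseProduct a b))
    (hb : b ≠ []) (hab : ¬ a.IsChain (· ≠ ·)) : Even a.length ∧ Even b.length := by
  obtain ⟨s, c, t, rfl⟩ := exists_append_cons_cons_of_not_isChain_ne hab
  set a := s ++ c :: c :: t
  have h₁ : thueMorseProduct a b = (a ++ b ++ b ++ s) ++ c :: c :: (t ++ b ++ a ++ a ++ b) := by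
    simp [thueMorseProduct, a]
  have h₂ : thueMorseProduct a b = (a ++ b ++ b ++ a ++ b ++ s) ++ c :: c :: (t ++ a ++ b) := by
    simp [thueMorseProduct, a]
  have h₃ : thueMorseProduct a b = (a ++ b ++ b ++ a ++ b ++ a ++ s) ++ c :: c :: (t ++ b) := by
    simp [thueMorseProduct, a]
  have h₁₂ := h.length_mod_two_eq h₁ h₂ (by simp [hb]) (by simp [hb]) (by simp [hb]) (by simp [hb])
  have h₂₃ := h.length_mod_two_eq h₂ h₃ (by simp [hb]) (by simp [hb]) (by simp [hb]) (by simp [hb])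
  simp only [List.length_append] at h₁₂ h₂₃
  constructor <;> grind

theorem even_length_of_not_isChain_ne_right (h : PowerFree (7 / 3) (thueMorseProduct a b))
    (ha : a ≠ []) (hab : ¬ b.IsChain (· ≠ ·)) : Even a.length ∧ Even b.length := by
  obtain ⟨s, c, t, rfl⟩ := exists_append_cons_cons_of_not_isChain_ne hab
  set b := s ++ c :: c :: t
  have h₁ : thueMorseProduct a b = (a ++ s) ++ c :: c :: (t ++ b ++ a ++ b ++ a ++ a ++ b) := by
    simp [thueMorseProduct, b]
  have h₂ : thueMorseProduct a b = (a ++ b ++ s) ++ c :: c :: (t ++ a ++ b ++ a ++ a ++ b) := by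
    simp [thueMorseProduct, b]
  have h₃ : thueMorseProduct a b = (a ++ b ++ b ++ a ++ s) ++ c :: c :: (t ++ a ++ a ++ b) := by
    simp [thueMorseProduct, b]
  have h₁₂ := h.length_mod_two_eq h₁ h₂ (by simp [ha]) (by simp [ha]) (by simp [ha]) (by simp [ha])
  have h₂₃ := h.length_mod_two_eq h₂ h₃ (by simp [ha]) (by simp [ha]) (by simp [ha]) (by simp [ha])
  simp only [List.length_append] at h₁₂ h₂₃
  constructor <;> grind

theorem even_length_of_getLast_eq_head (h : PowerFree (7 / 3) (thueMorseProduct a b))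
    (ha : a ≠ []) (hb : b ≠ []) (hab : a.getLast ha = b.head hb) (hba : b.getLast hb = a.head ha) :
    Even a.length ∧ Even b.length := by
  have h₁ : IsInnerDouble (thueMorseProduct a b) ((a ++ b).length + b.length - 1) := by
    simpa [thueMorseProduct] using isInnerDouble_of_getLast_eq_head (u := a ++ b)
      (v := b ++ a ++ a ++ b) (by simp [ha]) (by simp [hb]) hb ha hba
  have h₂ : IsInnerDouble (thueMorseProduct a b) ((a ++ b ++ b).length + a.length - 1) := by
    simpa [thueMorseProduct] using isInnerDouble_of_getLast_eq_head (u := a ++ b ++ b)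
      (v := a ++ a ++ b) (by simp [ha]) (by simp [hb]) ha hb hab
  have h₃ : IsInnerDouble (thueMorseProduct a b) ((a ++ b ++ b ++ a).length + b.length - 1) := by
    simpa [thueMorseProduct] using isInnerDouble_of_getLast_eq_head (u := a ++ b ++ b ++ a)
      (v := a ++ b) (by simp [ha]) (by simp [hb]) hb ha hba
  have h₁₂ := h.isInnerDouble_mod_two_eq h₁ h₂
  have h₂₃ := h.isInnerDouble_mod_two_eq h₂ h₃
  have ha' := List.length_pos_iff.mpr ha
  have hb' := List.length_pos_iff.mpr hb
  simp only [List.length_append] at h₁₂ h₂₃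
  constructor <;> grind

theorem getLast_eq_head_iff_of_isChain_ne (h : PowerFree (5 / 2) (thueMorseProduct a b))
    (ha : a ≠ []) (hb : b ≠ []) (hac : a.IsChain (· ≠ ·)) (hbc : b.IsChain (· ≠ ·)) :
    a.getLast ha = b.head hb ↔ b.getLast hb = a.head ha := by
  have habb : PowerFree (5 / 2) (a ++ b ++ b) :=
    h.of_isInfix ⟨[], a ++ b ++ a ++ a ++ b, by simp [thueMorseProduct]⟩
  have hbba : PowerFree (5 / 2) (b ++ b ++ a) :=
    h.of_isInfix ⟨a, b ++ a ++ a ++ b, by simp [thueMorseProduct]⟩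
  have hbaa : PowerFree (5 / 2) (b ++ a ++ a) :=
    h.of_isInfix ⟨a ++ b ++ b ++ a, b, by simp [thueMorseProduct]⟩
  have haab : PowerFree (5 / 2) (a ++ a ++ b) :=
    h.of_isInfix ⟨a ++ b ++ b ++ a ++ b, [], by simp [thueMorseProduct]⟩
  have hiff (hga : a.getLast ha = a.head ha) (hgb : b.getLast hb = b.head hb) :
      a.getLast ha = b.head hb ↔ b.getLast hb = a.head ha := by
    rw [hga, hgb, eq_comm]
  constructor <;> intro heq <;> by_contra hne
  · exact hne ((hiff (hbaa.getLast_eq_head_of_append_square hb ha hbc hac hne)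
      (hbba.getLast_eq_head_of_square_append hb ha hbc hac hne)).mp heq)
  · exact hne ((hiff (haab.getLast_eq_head_of_square_append ha hb hac hbc hne)
      (habb.getLast_eq_head_of_append_square ha hb hac hbc hne)).mpr heq)

theorem exists_eq_singleton_of_isChain_ne (h : PowerFree (5 / 2) (thueMorseProduct a b))
    (ha : a ≠ []) (hb : b ≠ []) (hac : a.IsChain (· ≠ ·)) (hbc : b.IsChain (· ≠ ·))
    (hab : a.getLast ha ≠ b.head hb) (hba : b.getLast hb ≠ a.head ha) :
    ∃ c, a = [c] ∧ b = [!c] := by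
  have hbabac : (b ++ a ++ (b ++ a)).IsChain (· ≠ ·) := by
    have hbac : (b ++ a).IsChain (· ≠ ·) := isChain_ne_append hbc hac hb ha hba
    refine isChain_ne_append hbac hbac (by simp [ha]) (by simp [ha]) ?_
    simpa [ha, hb] using hab
  have hbaba : b ++ a ++ (b ++ a) <:+: thueMorseProduct a b :=
    ⟨a ++ b, a ++ b, by simp [thueMorseProduct]⟩
  have hlen := (h.of_isInfix hbaba).length_lt_five_of_isChain_ne hbabac
  have ha' := List.length_pos_iff.mpr ha
  have hb' := List.length_pos_iff.mpr hb
  simp only [List.length_append] at hlen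
  obtain ⟨c, rfl⟩ := List.length_eq_one_iff.mp (show a.length = 1 by lia)
  obtain ⟨d, rfl⟩ := List.length_eq_one_iff.mp (show b.length = 1 by lia)
  have hcd : c ≠ d := by simpa using hab
  exact ⟨c, rfl, by rw [Bool.eq_not_of_ne hcd.symm]⟩

theorem even_length_or_exists_eq_singleton (h : PowerFree (7 / 3) (thueMorseProduct a b))
    (ha : a ≠ []) (hb : b ≠ []) :
    (Even a.length ∧ Even b.length) ∨ ∃ c, a = [c] ∧ b = [!c] := by
  by_cases hac : a.IsChain (· ≠ ·)
  swap; · exact .inl (even_length_of_not_isChain_ne_left h hb hac)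
  by_cases hbc : b.IsChain (· ≠ ·)
  swap; · exact .inl (even_length_of_not_isChain_ne_right h ha hbc)
  have h' : PowerFree (5 / 2) (thueMorseProduct a b) := h.mono (by norm_num)
  have hiff := getLast_eq_head_iff_of_isChain_ne h' ha hb hac hbc
  by_cases hab : a.getLast ha = b.head hb
  · exact .inl (even_length_of_getLast_eq_head h ha hb hab (hiff.mp hab))
  · exact .inr (exists_eq_singleton_of_isChain_ne h' ha hb hac hbc hab (mt hiff.mpr hab))

theorem getLast_ne_getLast_of_thueMorseProduct (h : PowerFree (7 / 3) (thueMorseProduct a b))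
    (ha : a ≠ []) (hb : b ≠ []) : a.getLast ha ≠ b.getLast hb := by
  obtain hba | hab := le_total b.length a.length
  · refine PowerFree.getLast_ne_getLast_of_square (v := a ++ b ++ a ++ a ++ b) ?_ ha hb
      (by lia) (by grind)
    simpa [thueMorseProduct] using h
  · have hne := PowerFree.getLast_ne_getLast_of_square (u := a ++ b ++ b ++ a ++ b) (v := b)
      h (by simp [ha]) ha (by grind) (by lia)
    simpa [hb, eq_comm] using hne

theorem not_isInnerDouble_of_even (h : PowerFree (7 / 3) (thueMorseProduct a b)) (ha : a ≠ [])
    (hb : b ≠ []) (hae : Even a.length) (hbe : Even b.length) {i : ℕ} (hi : i % 2 = 0) :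
    ¬ IsInnerDouble (thueMorseProduct a b) i := by
  have ha' := List.length_pos_iff.mpr ha
  have hb' := List.length_pos_iff.mpr hb
  intro hdouble
  have hlast := getLast_ne_getLast_of_thueMorseProduct h ha hb
  obtain hab | hbb : a.getLast ha = b.head hb ∨ b.getLast hb = b.head hb := by
    by_contra! hne
    exact hlast ((Bool.eq_not_of_ne hne.1).trans (Bool.eq_not_of_ne hne.2).symm)
  · have hodd : IsInnerDouble (thueMorseProduct a b) ((a ++ b ++ b).length + a.length - 1) := by
      simpa [thueMorseProduct] using isInnerDouble_of_getLast_eq_head (u := a ++ b ++ b)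
        (v := a ++ a ++ b) (by simp [ha]) (by simp [hb]) ha hb hab
    have := h.isInnerDouble_mod_two_eq hdouble hodd
    grind
  · have hodd : IsInnerDouble (thueMorseProduct a b) (a.length + b.length - 1) := by
      simpa [thueMorseProduct] using isInnerDouble_of_getLast_eq_head (u := a)
        (v := a ++ b ++ a ++ a ++ b) ha (by simp [hb]) hb hb hbb
    have := h.isInnerDouble_mod_two_eq hdouble hodd
    grind

theorem exists_eq_mu_and_eq_mu (h : PowerFree (7 / 3) (thueMorseProduct a b)) (ha : a ≠ [])
    (hb : b ≠ []) (hae : Even a.length) (hbe : Even b.length) :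
    ∃ a' b', a = mu a' ∧ b = mu b' := by
  have hnot {i : ℕ} := not_isInnerDouble_of_even h ha hb hae hbe (i := i)
  obtain ⟨a', ha'⟩ := exists_eq_mu_of_not_isInnerDouble (w := thueMorseProduct a b)
    (u := a ++ b ++ b) (x := a) (v := b ++ a ++ a ++ b) (by simp [thueMorseProduct])
    (by simp [ha]) (by simp [hb]) hae (fun i hi => hnot (by grind))
  obtain ⟨b', hb'⟩ := exists_eq_mu_of_not_isInnerDouble (w := thueMorseProduct a b)
    (u := a ++ b) (x := b) (v := a ++ b ++ a ++ a ++ b) (by simp [thueMorseProduct])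
    (by simp [ha]) (by simp [hb]) hbe (fun i hi => hnot (by grind))
  exact ⟨a', b', ha', hb'⟩

end Product

theorem exists_eq_iterate_mu {a b : List Bool} (h : PowerFree (7 / 3) (thueMorseProduct a b))
    (ha : a ≠ []) (hb : b ≠ []) : ∃ k c, a = mu^[k] [c] ∧ b = mu^[k] [!c] := by
  obtain ⟨hae, hbe⟩ | ⟨c, rfl, rfl⟩ := even_length_or_exists_eq_singleton h ha hb
  · obtain ⟨a', b', rfl, rfl⟩ := exists_eq_mu_and_eq_mu h ha hb hae hbe
    rw [← mu_thueMorseProduct] at h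
    obtain ⟨k, c, rfl, rfl⟩ := exists_eq_iterate_mu h.of_mu (by rintro rfl; exact ha rfl)
      (by rintro rfl; exact hb rfl)
    exact ⟨k + 1, c, by simp only [Function.iterate_succ_apply'],
      by simp only [Function.iterate_succ_apply']⟩
  · exact ⟨0, c, rfl, rfl⟩
termination_by a.length
decreasing_by
  have := List.length_pos_iff.mpr ha
  subst_vars
  grind [length_mu]

/-- If `h` is a non-erasing morphism such that `h(01101001)` is `7/3`-power-free,
then `h = μ^k` or `h = E ∘ μ^k` for some `k ≥ 0`. -/
theorem power_free_morphism_is_thue_morse (h : List Bool → List Bool)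
    (hmor : IsMorphism h) (hne : NonErasing h)
    (hpf : PowerFree (7/3 : ℝ) (h w01101001)) :
    ∃ k : ℕ, h = mu^[k] ∨ h = eMorph ∘ mu^[k] := by
  rw [hmor.map_w01101001] at hpf
  obtain ⟨k, c, h0, h1⟩ := exists_eq_iterate_mu hpf hne.1 hne.2
  have hmu : IsMorphism mu^[k] := isMorphism_mu.iterate k
  refine ⟨k, ?_⟩
  cases c with
  | false =>
    refine .inl (hmor.ext hmu fun d => ?_)
    cases d
    · exact h0
    · exact h1
  | true =>
    refine .inr (hmor.ext (isMorphism_eMorph.comp hmu) fun d => ?_)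
    rw [Function.comp_apply, (commute_eMorph_mu.iterate_right k).eq]
    cases d
    · exact h0
    · exact h1
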